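/- Let U ⊆ Σ(X,P) be such that S(X,P) ∪ U generates the monoid Σ(X,P), and let i ∈ {1,…,r} be such that either i = 1 and d_1 ≠ 1, or i ≥ 2 and d_i − d_{i−1} ≥ 2. Then U ∩ 𝒞_i ≠ ∅. -/

import Mathlib

open Function Set

/-- The monoid (as a subset of `Function.End X`) of all transformations preserving
the partition induced by the equivalence relation `r`. -/
def TSet {X : Type*} (r : Setoid X) : Set (Function.End X) :=
  {f | ∀ x y : X, r x y → r (f x) (f y)}

/-- The group of units of `TSet r` (i.e. `S(X,P)`): the permutations `g` of `X` with
`x ∼ y ↔ g x ∼ g y`. -/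
def SXP {X : Type*} (r : Setoid X) : Set (Function.End X) :=
  {f | Function.Bijective f ∧ ∀ x y : X, r (f x) (f y) ↔ r x y}

/-- The submonoid (as a subset) of transformations preserving the partition whose
image meets every block of the partition. -/
def SigmaSet {X : Type*} (r : Setoid X) : Set (Function.End X) :=
  {f | f ∈ TSet r ∧ ∀ B ∈ Setoid.classes r, (Set.range f ∩ B).Nonempty}

/-- The number of blocks of the partition having size `s`. -/
noncomputable def blockCount {X : Type*} (r : Setoid X) (s : ℕ) : ℕ :=
  {B | B ∈ Setoid.classes r ∧ B.ncard = s}.ncard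

/-- Membership in `ℬᵢ`, where `a = dᵢ` and `b = d_{i+1}` are consecutive distinct
block sizes: `f ∈ Σ(X,P)`, and there are blocks `B, B'` of size `a` and `C, C'`
of size `b` such that `f` maps `B` injectively into `C`, maps `C'` onto `B'`, and
maps every other block bijectively onto a block of the same size. -/
def memB {X : Type*} (r : Setoid X) (a b : ℕ) (f : Function.End X) : Prop :=
  f ∈ SigmaSet r ∧
    ∃ B B' C C' : Set X,
      B ∈ Setoid.classes r ∧ B' ∈ Setoid.classes r ∧
      C ∈ Setoid.classes r ∧ C' ∈ Setoid.classes r ∧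
      B.ncard = a ∧ B'.ncard = a ∧ C.ncard = b ∧ C'.ncard = b ∧
      Set.InjOn f B ∧ f '' B ⊆ C ∧ f '' C' = B' ∧
      ∀ D ∈ Setoid.classes r, D ≠ B → D ≠ C' →
        ∃ E ∈ Setoid.classes r, f '' D = E ∧ Set.InjOn f D ∧ E.ncard = D.ncard

/-- Membership in `𝒞ᵢ`, where `s = dᵢ` is a block size: `f ∈ Σ(X,P)`, `f` maps
every block into a block of the same size, there is one block of size `s` whose
image under `f` has size `s - 1`, and `f` is injective on every other block. -/
def memC {X : Type*} (r : Setoid X) (s : ℕ) (f : Function.End X) : Prop :=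
  f ∈ SigmaSet r ∧
    (∀ D ∈ Setoid.classes r, ∃ E ∈ Setoid.classes r, E.ncard = D.ncard ∧ f '' D ⊆ E) ∧
    ∃ B ∈ Setoid.classes r, B.ncard = s ∧ (f '' B).ncard = s - 1 ∧
      ∀ D ∈ Setoid.classes r, D ≠ B → Set.InjOn f D


/-- The block of `x`. -/
def blk {X : Type*} (r : Setoid X) (x : X) : Set X := {y | r y x}

theorem blk_eq {X : Type*} (r : Setoid X) {x y : X} : blk r x = blk r y ↔ r x y := by
  constructor
  · intro h
    have : x ∈ blk r x := r.refl x
    rw [h] at this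
    exact this
  · intro h
    ext z
    exact ⟨fun hz => r.trans hz h, fun hz => r.trans hz (r.symm h)⟩

theorem mem_blk {X : Type*} (r : Setoid X) (x : X) : x ∈ blk r x := r.refl x

theorem forall_classes {X : Type*} (r : Setoid X) (p : Set X → Prop) :
    (∀ D ∈ Setoid.classes r, p D) ↔ ∀ x, p (blk r x) := by
  constructor
  · intro h x
    exact h _ ⟨x, rfl⟩
  · rintro h D ⟨x, rfl⟩
    exact h x

theorem exists_classes {X : Type*} (r : Setoid X) (p : Set X → Prop) :
    (∃ D ∈ Setoid.classes r, p D) ↔ ∃ x, p (blk r x) := by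
  constructor
  · rintro ⟨D, ⟨x, rfl⟩, h⟩
    exact ⟨x, h⟩
  · rintro ⟨x, h⟩
    exact ⟨_, ⟨x, rfl⟩, h⟩

theorem mem_Sigma_iff {X : Type*} (r : Setoid X) (f : Function.End X) :
    f ∈ SigmaSet r ↔ (∀ x y, r x y → r (f x) (f y)) ∧ ∀ x, ∃ y, r (f y) x := by
  unfold SigmaSet TSet
  rw [Set.mem_setOf_eq, forall_classes]
  refine and_congr Iff.rfl (forall_congr' fun x => ?_)
  constructor
  · rintro ⟨_, ⟨y, rfl⟩, h⟩
    exact ⟨y, h⟩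
  · rintro ⟨y, h⟩
    exact ⟨_, ⟨y, rfl⟩, h⟩

theorem memC_iff {X : Type*} (r : Setoid X) (s : ℕ) (f : Function.End X) :
    memC r s f ↔ f ∈ SigmaSet r ∧ (∀ x, (blk r (f x)).ncard = (blk r x).ncard) ∧
      ∃ b, (blk r b).ncard = s ∧ (f '' blk r b).ncard = s - 1 ∧
        ∀ x, ¬ r x b → Set.InjOn f (blk r x) := by
  unfold memC
  rw [forall_classes, exists_classes]
  refine and_congr_right fun hf => and_congr (forall_congr' fun x => ?_)
    (exists_congr fun b => and_congr_right fun _ => and_congr_right fun _ => ?_)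
  · rw [exists_classes]
    constructor
    · rintro ⟨e, he, h⟩
      have : f x ∈ blk r e := h ⟨x, mem_blk r x, rfl⟩
      rw [(blk_eq r).2 this]
      exact he
    · intro h
      refine ⟨f x, h, ?_⟩
      rintro _ ⟨y, hy, rfl⟩
      exact hf.1 _ _ hy
  · rw [forall_classes]
    refine forall_congr' fun x => ?_
    rw [Ne, blk_eq]

theorem size_pres {X : Type*} [Fintype X] (r : Setoid X) (f : Function.End X)
    (hf : f ∈ SigmaSet r) (h : ∀ x, (blk r x).ncard ≤ (blk r (f x)).ncard) (x : X) :
    (blk r (f x)).ncard = (blk r x).ncard := by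
  classical
  rw [mem_Sigma_iff] at hf
  let σ : Quotient r → Quotient r := Quotient.map f hf.1
  have hσ : Function.Surjective σ := by
    intro q
    induction q using Quotient.inductionOn with
    | _ x =>
      obtain ⟨y, hy⟩ := hf.2 x
      exact ⟨⟦y⟧, Quotient.sound hy⟩
  have hb : Function.Bijective σ := Finite.surjective_iff_bijective.1 hσ
  let w : Quotient r → ℕ := Quotient.lift (fun x => (blk r x).ncard)
    (fun a b hab => by
      have := (blk_eq r).2 hab
      simp only [this])
  have hle : ∀ q ∈ (Finset.univ : Finset (Quotient r)), w q ≤ w (σ q) := by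
    intro q _
    induction q using Quotient.inductionOn with
    | _ x => exact h x
  have hsum : ∑ q, w q = ∑ q, w (σ q) := (hb.sum_comp w).symm
  exact ((Finset.sum_eq_sum_iff_of_le hle).1 hsum ⟦x⟧ (Finset.mem_univ _)).symm

theorem key {X : Type*} [Fintype X] (r : Setoid X) (s : ℕ) (hs : 2 ≤ s)
    (hno : ∀ x, (blk r x).ncard ≠ s - 1) (x y : Function.End X)
    (hx : x ∈ SigmaSet r) (hy : y ∈ SigmaSet r) (h : memC r s (x * y)) :
    memC r s x ∨ memC r s y := by
  rw [memC_iff] at h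
  obtain ⟨-, hsz, b, hb, hbi, hinj⟩ := h
  have hcomp : ∀ S : Set X, (x * y) '' S = x '' (y '' S) := fun S => Set.image_comp x y S
  have hyinj : ∀ z, ¬ r z b → Set.InjOn y (blk r z) := by
    intro z hz a ha c hc hac
    exact hinj z hz ha hc (congrArg x hac)
  have hmaps : ∀ z, y '' blk r z ⊆ blk r (y z) := by
    rintro z _ ⟨w, hw, rfl⟩
    exact hy.1 _ _ hw
  have hrank : s - 1 ≤ (y '' blk r b).ncard := by
    rw [← hbi, hcomp]
    exact Set.ncard_image_le (Set.toFinite _)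
  have hysz : ∀ z, (blk r (y z)).ncard = (blk r z).ncard := by
    apply size_pres r y hy
    intro z
    by_cases hz : r z b
    · rw [(blk_eq r).2 hz, (blk_eq r).2 (hy.1 _ _ hz), hb]
      have h1 := Set.ncard_le_ncard (hmaps b) (Set.toFinite _)
      have h2 := hno (y b)
      omega
    · rw [← (hyinj z hz).ncard_image]
      exact Set.ncard_le_ncard (hmaps z) (Set.toFinite _)
  by_cases hbinj : Set.InjOn y (blk r b)
  · left
    have hyinj' : ∀ z, Set.InjOn y (blk r z) := by
      intro z
      by_cases hz : r z b
      · rw [(blk_eq r).2 hz]; exact hbinj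
      · exact hyinj z hz
    have hbij : ∀ z, y '' blk r z = blk r (y z) := by
      intro z
      apply Set.eq_of_subset_of_ncard_le (hmaps z) _ (Set.toFinite _)
      rw [(hyinj' z).ncard_image, hysz]
    have hy2 := ((mem_Sigma_iff r y).1 hy).2
    rw [memC_iff]
    refine ⟨hx, ?_, y b, ?_, ?_, ?_⟩
    · intro z
      obtain ⟨w, hw⟩ := hy2 z
      rw [← (blk_eq r).2 hw, ← (blk_eq r).2 (hx.1 _ _ hw), hysz]
      exact hsz w
    · rw [hysz, hb]
    · rw [← hbij, ← hcomp, hbi]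
    · intro z hz
      obtain ⟨w, hw⟩ := hy2 z
      rw [← (blk_eq r).2 hw, ← hbij]
      have hwb : ¬ r w b := fun hwb => hz (r.trans (r.symm hw) (hy.1 _ _ hwb))
      rintro _ ⟨a, ha, rfl⟩ _ ⟨c, hc, rfl⟩ hac
      exact congrArg y (hinj w hwb ha hc hac)
  · right
    rw [memC_iff]
    refine ⟨hy, hysz, b, hb, ?_, hyinj⟩
    have h1 : (y '' blk r b).ncard ≤ (blk r b).ncard := Set.ncard_image_le (Set.toFinite _)
    have h2 : (y '' blk r b).ncard ≠ (blk r b).ncard := fun h =>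
      hbinj (Set.injOn_of_ncard_image_eq h (Set.toFinite _))
    omega

theorem not_memC_of_inj {X : Type*} [Fintype X] (r : Setoid X) (s : ℕ) (hs : 2 ≤ s)
    (f : Function.End X) (hf : Function.Injective f) : ¬ memC r s f := by
  rw [memC_iff]
  rintro ⟨-, -, b, hb, hbi, -⟩
  rw [Set.ncard_image_of_injective _ hf] at hbi
  omega

theorem exists_memC {X : Type*} [Fintype X] (r : Setoid X) (s : ℕ) (hs : 2 ≤ s)
    (b : X) (hb : (blk r b).ncard = s) : ∃ f, memC r s f := by
  classical
  obtain ⟨a, ha, hab⟩ := Set.exists_ne_of_one_lt_ncard (by omega : 1 < (blk r b).ncard) b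
  let f : Function.End X := fun x => if x = a then b else x
  have hfa : f a = b := if_pos rfl
  have hfx : ∀ x, x ≠ a → f x = x := fun x hx => if_neg hx
  have hr : ∀ x, r (f x) x := by
    intro x
    by_cases hx : x = a
    · subst hx
      rw [hfa]
      exact r.symm ha
    · rw [hfx x hx]
  refine ⟨f, (memC_iff r s f).2 ⟨(mem_Sigma_iff r f).2 ⟨?_, fun x => ⟨x, hr x⟩⟩, ?_, b, hb, ?_, ?_⟩⟩
  · intro x y hxy
    exact r.trans (hr x) (r.trans hxy (r.symm (hr y)))
  · intro x
    rw [(blk_eq r).2 (hr x)]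
  · have : f '' blk r b = blk r b \ {a} := by
      ext z
      constructor
      · rintro ⟨w, hw, rfl⟩
        refine ⟨r.trans (hr w) hw, ?_⟩
        by_cases hwa : w = a
        · subst hwa
          rw [hfa]
          exact fun h => hab h.symm
        · rw [hfx w hwa]
          exact hwa
      · rintro ⟨hz, hza⟩
        exact ⟨z, hz, hfx z hza⟩
    rw [this, Set.ncard_diff_singleton_of_mem ha, hb]
  · intro x hx
    have : ∀ z ∈ blk r x, f z = z := by
      intro z hz
      apply hfx
      rintro rfl
      exact hx (r.trans (r.symm hz) ha)
    intro z hz w hw h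
    rwa [this z hz, this w hw] at h

theorem blockCount_ne_zero {X : Type*} [Fintype X] (r : Setoid X) (s : ℕ) :
    blockCount r s ≠ 0 ↔ ∃ x, (blk r x).ncard = s := by
  unfold blockCount
  rw [← Nat.pos_iff_ne_zero, Set.ncard_pos (Set.toFinite _), ← exists_classes r (fun D => D.ncard = s)]
  rfl

/-- (Here `d 1 < d 2 < … < d R` are the distinct block sizes
of the partition.)  If `U ⊆ Σ(X,P)` is such that `S(X,P) ∪ U` generates the
monoid `Σ(X,P)`, and `i ∈ {1, …, R}` is such that either `i = 1` and `d 1 ≠ 1`,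
or `i ≥ 2` and `d i − d (i−1) ≥ 2`, then `U ∩ 𝒞ᵢ ≠ ∅`. -/
theorem generators_meet_C {X : Type*} [Fintype X] [Nonempty X] (r : Setoid X)
    (R : ℕ) (d : ℕ → ℕ)
    (hdmono : ∀ i, 1 ≤ i → i + 1 ≤ R → d i < d (i + 1))
    (hdsizes : ∀ s, blockCount r s ≠ 0 ↔ ∃ i, 1 ≤ i ∧ i ≤ R ∧ d i = s)
    (U : Set (Function.End X)) (hU : U ⊆ SigmaSet r)
    (hgen : (Submonoid.closure (SXP r ∪ U) : Set (Function.End X)) = SigmaSet r)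
    (i : ℕ) (hiR : 1 ≤ i ∧ i ≤ R)
    (hi : (i = 1 ∧ d 1 ≠ 1) ∨ (2 ≤ i ∧ d (i - 1) + 2 ≤ d i)) :
    ∃ f ∈ U, memC r (d i) f := by
  obtain ⟨b, hb⟩ := (blockCount_ne_zero r (d i)).1 ((hdsizes (d i)).2 ⟨i, hiR.1, hiR.2, rfl⟩)
  have hpos : 0 < (blk r b).ncard := (Set.ncard_pos (Set.toFinite _)).2 ⟨b, mem_blk r b⟩
  have hs : 2 ≤ d i := by
    rcases hi with ⟨rfl, h⟩ | ⟨_, h⟩ <;> omega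
  have hmono : ∀ k j, 1 ≤ j → j + k ≤ R → d j + k ≤ d (j + k) := by
    intro k
    induction k with
    | zero => intro j _ _; simp
    | succ k ih =>
      intro j hj hjk
      have h1 := ih j hj (by omega)
      have h2 := hdmono (j + k) (by omega) (by omega)
      rw [← Nat.add_assoc j k 1]
      omega
  have hno : ∀ x, (blk r x).ncard ≠ d i - 1 := by
    intro x hx
    obtain ⟨j, hj1, hjR, hj⟩ := (hdsizes _).1 ((blockCount_ne_zero r (d i - 1)).2 ⟨x, hx⟩)
    rcases Nat.lt_or_ge j i with hlt | hge
    · have h1 := hmono (i - 1 - j) j hj1 (by omega)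
      rw [show j + (i - 1 - j) = i - 1 by omega] at h1
      rcases hi with ⟨_, h⟩ | ⟨_, h⟩ <;> omega
    · have h1 := hmono (j - i) i hiR.1 (by omega)
      rw [show i + (j - i) = j by omega] at h1
      omega
  obtain ⟨f, hf⟩ := exists_memC r (d i) hs b hb
  have hfc : f ∈ Submonoid.closure (SXP r ∪ U) := by
    have := hf.1
    rw [← hgen] at this
    exact this
  induction hfc using Submonoid.closure_induction with
  | mem f hfm =>
    rcases hfm with h | h
    · exact absurd hf (not_memC_of_inj r _ hs f h.1.1)
    · exact ⟨f, h, hf⟩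
  | one => exact absurd hf (not_memC_of_inj r _ hs 1 (fun _ _ h => h))
  | mul x y hx hy ihx ihy =>
    have hx' : x ∈ SigmaSet r := by rw [← hgen]; exact hx
    have hy' : y ∈ SigmaSet r := by rw [← hgen]; exact hy
    rcases key r _ hs hno x y hx' hy' hf with h | h
    · exact ihx h
    · exact ihy h
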